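/- (Maróti) Let n > 2 and let G be a subgroup of the symmetric group on n points. Then the number of conjugacy classes of G is at most 3^((n−1)/2). -/

import Mathlib

/-!
Write `k(H)` for the number of conjugacy classes of `H`. The bound `√3 ^ (n - 1)` is refined to one
that is multiplicative over orbits: if `H` leaves a finite set `D` invariant and `K` is its subgroup
fixing `D` pointwise, then `k(H) ≤ k(K) * ∏ β(#o)` over the orbits `o` of `H` on `D`, where `β(d)`
is `√3 ^ (d - 1)`, except that `β(2) = 2`. By induction on `D` it suffices to treat a single orbit,
where the bound is known for every subgroup between `K` and a point stabilizer.

Commuting pairs of elements of `H` number `k(H) * |H|`, and at most `k(K) * |H|` of them have their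
second component in `K`. If `a` commutes with some `x` moving points of the orbit, then, after
averaging over the points moved by `x`, one may take `a` to fix such a point `w`; being
in the centralizer of `x`, it also fixes `x w`, `x² w`, and so on. Prescribing these points one
after another confines `x` to smaller and smaller cosets, until the points already prescribed have
a stabilizer `A` which fixes the next one as well. At that stage `x` ranges over a coset of `A`
and contributes at most `|A| * k(A)` pairs, so the inductive bound for `k(A)` applies. Going back
up the chain, the choice of each next point costs a factor controlled by the weights of the orbits
of the preceding stabilizer, and elementary inequalities between `β` and these weights show
that the total stays below `k(K) * |H| * (β(#D) - 1)`.
-/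

namespace Maroti

open MulAction

section OrbitConstants

/-- The bound for the number of conjugacy classes contributed by an orbit of length `d`, namely
`√3 ^ (d - 1)` except for `d = 2`. Truncated subtraction makes the value at `0` equal to `1`. -/
noncomputable def orbitBound (d : ℕ) : ℝ := if d = 2 then 2 else √3 ^ (d - 1)

/-- The weight of an orbit of length `d` in the count of commuting pairs. The value for `3 ≤ d` is
the solution `c` of `1 + c = √3 * c`, which makes `prod_orbitBound_mul_one_add_sum_le` an equality
for a single orbit of length at least `3`. -/
noncomputable def orbitWeight (d : ℕ) : ℝ := if d ≤ 2 then 1 else (√3 + 1) / 2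

lemma sqrt_three_bounds : (1.732 : ℝ) ≤ √3 ∧ √(3 : ℝ) ≤ 1.7321 :=
  ⟨Real.le_sqrt_of_sq_le (by norm_num), Real.sqrt_le_iff.mpr (by norm_num)⟩

lemma sqrt_three_sq : √(3 : ℝ) ^ 2 = 3 := Real.sq_sqrt (by norm_num)

lemma one_le_sqrt_three_pow (d : ℕ) : 1 ≤ √(3 : ℝ) ^ d :=
  one_le_pow₀ (by linarith [sqrt_three_bounds.1])

@[simp] lemma orbitBound_zero : orbitBound 0 = 1 := by simp [orbitBound]

@[simp] lemma orbitBound_one : orbitBound 1 = 1 := by simp [orbitBound]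

@[simp] lemma orbitBound_two : orbitBound 2 = 2 := by simp [orbitBound]

lemma orbitBound_succ {d : ℕ} (hd : d ≠ 1) : orbitBound (d + 1) = √3 ^ d := by
  simp [orbitBound, hd]

@[simp] lemma orbitWeight_one : orbitWeight 1 = 1 := by simp [orbitWeight]

@[simp] lemma orbitWeight_two : orbitWeight 2 = 1 := by simp [orbitWeight]

lemma orbitWeight_of_three_le {d : ℕ} (hd : 3 ≤ d) : orbitWeight d = (√3 + 1) / 2 :=
  if_neg (by omega)

lemma orbitBound_eq_rpow {n : ℕ} (hn : 2 < n) : orbitBound n = 3 ^ (((n : ℝ) - 1) / 2) := by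
  rw [orbitBound, if_neg hn.ne', Real.sqrt_eq_rpow, ← Real.rpow_mul_natCast (by norm_num),
    Nat.cast_pred (by omega), one_div_mul_eq_div]

lemma one_le_orbitBound (d : ℕ) : 1 ≤ orbitBound d := by
  unfold orbitBound
  split_ifs
  · norm_num
  · exact one_le_sqrt_three_pow _

lemma one_le_orbitWeight (d : ℕ) : 1 ≤ orbitWeight d := by
  unfold orbitWeight
  split_ifs <;> linarith [sqrt_three_bounds.1]

lemma orbitBound_pos (d : ℕ) : 0 < orbitBound d := zero_lt_one.trans_le (one_le_orbitBound d)

lemma orbitWeight_pos (d : ℕ) : 0 < orbitWeight d := zero_lt_one.trans_le (one_le_orbitWeight d)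

lemma three_le_orbitBound {d : ℕ} (hd : 3 ≤ d) : 3 ≤ orbitBound d := by
  obtain ⟨e, rfl⟩ := Nat.exists_eq_add_of_le' hd
  rw [orbitBound_succ (by omega), pow_add, sqrt_three_sq]
  linarith [one_le_sqrt_three_pow e]

lemma sqrt_three_pow_eq_mul_orbitBound {d : ℕ} (hd : 3 ≤ d) : √3 ^ d = √3 * orbitBound d := by
  obtain ⟨e, rfl⟩ := Nat.exists_eq_add_of_le' hd
  rw [orbitBound_succ (by omega), pow_succ']

lemma orbit_constants_trichotomy {d : ℕ} (hd : d ≠ 0) :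
    (orbitBound d = 1 ∧ orbitWeight d = 1 ∧ √3 ^ d = √3) ∨
      (orbitBound d = 2 ∧ orbitWeight d = 1 ∧ √(3 : ℝ) ^ d = 3) ∨
      (3 ≤ orbitBound d ∧ orbitWeight d = (√3 + 1) / 2 ∧ √3 ^ d = √3 * orbitBound d) := by
  obtain rfl | rfl | hd : d = 1 ∨ d = 2 ∨ 3 ≤ d := by omega
  · simp
  · simp
  · exact .inr (.inr ⟨three_le_orbitBound hd, orbitWeight_of_three_le hd,
      sqrt_three_pow_eq_mul_orbitBound hd⟩)

lemma four_thirds_mul_orbitBound_le {d : ℕ} (hd : d ≠ 0) : 4 / 3 * orbitBound d ≤ √3 ^ d := by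
  have hr := sqrt_three_bounds.1
  rcases orbit_constants_trichotomy hd with ⟨hb, -, hp⟩ | ⟨hb, -, hp⟩ | ⟨hb, -, hp⟩ <;> rw [hp] <;>
    nlinarith

lemma orbitBound_mul_le (a b : ℕ) : orbitBound a * orbitBound b ≤ orbitBound (a + b) := by
  rcases eq_or_ne a 0 with rfl | ha
  · simp
  rcases eq_or_ne b 0 with rfl | hb
  · simp
  by_cases hab : a + b = 2
  · obtain ⟨rfl, rfl⟩ : a = 1 ∧ b = 1 := by omega
    norm_num
  obtain ⟨-, hr⟩ := sqrt_three_bounds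
  have hβ := mul_pos (orbitBound_pos a) (orbitBound_pos b)
  refine le_of_mul_le_mul_left ?_ (Real.sqrt_pos.mpr (zero_lt_three (α := ℝ)))
  calc √3 * (orbitBound a * orbitBound b)
      ≤ (4 / 3 * orbitBound a) * (4 / 3 * orbitBound b) := by nlinarith
    _ ≤ √3 ^ a * √3 ^ b :=
        mul_le_mul (four_thirds_mul_orbitBound_le ha) (four_thirds_mul_orbitBound_le hb)
          (mul_pos (by norm_num) (orbitBound_pos b)).le (by positivity)
    _ = √3 * orbitBound (a + b) := by
        rw [← pow_add, sqrt_three_pow_eq_mul_orbitBound (by omega)]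

lemma orbitBound_mul_add_orbitWeight_le {d : ℕ} (hd : d ≠ 0) {S : ℝ} (hS : 2 ≤ S) :
    orbitBound d * (S + orbitWeight d) ≤ √3 ^ d * S := by
  have hr := sqrt_three_bounds.1
  rcases orbit_constants_trichotomy hd with ⟨hb, hw, hp⟩ | ⟨hb, hw, hp⟩ | ⟨hb, hw, hp⟩ <;>
    rw [hp, hw]
  · nlinarith
  · nlinarith
  · nlinarith [mul_nonneg (by linarith : 0 ≤ orbitBound d)
      (by nlinarith : 0 ≤ √3 * S - (S + (√3 + 1) / 2))]

variable {ι : Type*}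

lemma one_le_prod_orbitBound (s : Finset ι) (d : ι → ℕ) : 1 ≤ ∏ i ∈ s, orbitBound (d i) :=
  s.one_le_prod fun i _ => one_le_orbitBound (d i)

lemma card_le_sum_orbitWeight (s : Finset ι) (d : ι → ℕ) :
    (s.card : ℝ) ≤ ∑ i ∈ s, orbitWeight (d i) := by
  simpa using s.card_nsmul_le_sum (fun i => orbitWeight (d i)) 1 fun i _ => one_le_orbitWeight (d i)

lemma prod_orbitBound_le (s : Finset ι) (d : ι → ℕ) :
    ∏ i ∈ s, orbitBound (d i) ≤ orbitBound (∑ i ∈ s, d i) := by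
  induction s using Finset.cons_induction with
  | empty => simp
  | cons i s hi ih =>
    rw [Finset.prod_cons, Finset.sum_cons]
    exact (mul_le_mul_of_nonneg_left ih (orbitBound_pos (d i)).le).trans
      (orbitBound_mul_le _ _)

lemma prod_orbitBound_mul_one_add_sum_le {s : Finset ι} (hs : s.Nonempty) {d : ι → ℕ}
    (hd : ∀ i ∈ s, d i ≠ 0) :
    (∏ i ∈ s, orbitBound (d i)) * (1 + ∑ i ∈ s, orbitWeight (d i)) ≤
      (√3 + 1) / 2 * √3 ^ ∑ i ∈ s, d i := by
  have hsq := sqrt_three_sq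
  have hr := sqrt_three_bounds.1
  induction hs using Finset.Nonempty.cons_induction with
  | singleton i =>
    simp only [Finset.prod_singleton, Finset.sum_singleton]
    rcases orbit_constants_trichotomy (hd i (by simp)) with
      ⟨hb, hw, hp⟩ | ⟨hb, hw, hp⟩ | ⟨-, hw, hp⟩ <;> rw [hp, hw]
    · nlinarith
    · nlinarith
    · linear_combination -orbitBound (d i) / 2 * hsq
  | cons i s hi hs ih =>
    have hS : (1 : ℝ) ≤ ∑ j ∈ s, orbitWeight (d j) :=
      le_trans (by exact_mod_cast hs.card_pos) (card_le_sum_orbitWeight s d)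
    have hstep := orbitBound_mul_add_orbitWeight_le (hd i (by simp))
      (by linarith : 2 ≤ 1 + ∑ j ∈ s, orbitWeight (d j))
    simp only [Finset.prod_cons, Finset.sum_cons]
    set P := ∏ j ∈ s, orbitBound (d j)
    set E := ∑ j ∈ s, orbitWeight (d j)
    calc orbitBound (d i) * P * (1 + (orbitWeight (d i) + E))
        = P * (orbitBound (d i) * (1 + E + orbitWeight (d i))) := by ring
      _ ≤ P * (√3 ^ d i * (1 + E)) :=
          mul_le_mul_of_nonneg_left hstep (by linarith [one_le_prod_orbitBound s d])
      _ = √3 ^ d i * (P * (1 + E)) := by ring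
      _ ≤ √3 ^ d i * ((√3 + 1) / 2 * √3 ^ ∑ j ∈ s, d j) :=
          mul_le_mul_of_nonneg_left (ih fun j hj => hd j (by simp [hj])) (by positivity)
      _ = (√3 + 1) / 2 * √3 ^ (d i + ∑ j ∈ s, d j) := by ring

lemma orbitWeight_le {d : ℕ} (hd : d ≠ 0) : orbitWeight d ≤ d := by
  obtain rfl | rfl | hd : d = 1 ∨ d = 2 ∨ 3 ≤ d := by omega
  · simp
  · simp
  · have hd' : (3 : ℝ) ≤ d := by exact_mod_cast hd
    rw [orbitWeight_of_three_le hd]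
    linarith [sqrt_three_bounds.2]

lemma sum_orbitWeight_le {s : Finset ι} {d : ι → ℕ} (hd : ∀ i ∈ s, d i ≠ 0) :
    ∑ i ∈ s, orbitWeight (d i) ≤ (∑ i ∈ s, d i : ℕ) := by
  push_cast
  exact Finset.sum_le_sum fun i hi => orbitWeight_le (hd i hi)

lemma prod_orbitBound_mul_one_add_sum_le_succ {s : Finset ι} {d : ι → ℕ}
    (hd : ∀ i ∈ s, d i ≠ 0) :
    (∏ i ∈ s, orbitBound (d i)) * (1 + ∑ i ∈ s, orbitWeight (d i)) ≤
      orbitBound (∑ i ∈ s, d i + 1) * orbitWeight (∑ i ∈ s, d i + 1) := by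
  by_cases hD : ∑ i ∈ s, d i ≤ 1
  · have hP := prod_orbitBound_le s d
    have hE := sum_orbitWeight_le hd
    have hP' := one_le_prod_orbitBound s d
    interval_cases ∑ i ∈ s, d i
    · norm_num at hP hE ⊢
      nlinarith
    · norm_num at hP hE ⊢
      nlinarith
  · have hs : s.Nonempty := Finset.nonempty_of_sum_ne_zero (f := d) (by omega)
    rw [orbitBound_succ (by omega), orbitWeight_of_three_le (by omega), mul_comm (√3 ^ _)]
    exact prod_orbitBound_mul_one_add_sum_le hs hd

lemma orbitBound_pred_mul_prod_mul_sum_le {s : Finset ι} {d : ι → ℕ} (hd : ∀ i ∈ s, d i ≠ 0) :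
    orbitBound (∑ i ∈ s, d i - 1) *
        ((∏ i ∈ s, orbitBound (d i)) * ∑ i ∈ s, orbitWeight (d i)) ≤
      orbitBound (∑ i ∈ s, d i) ^ 2 * orbitWeight (∑ i ∈ s, d i) := by
  have hP := one_le_prod_orbitBound s d
  by_cases hD : ∑ i ∈ s, d i ≤ 2
  · have hPE := mul_le_mul (prod_orbitBound_le s d) (sum_orbitWeight_le hd)
      (Finset.sum_nonneg fun i _ => (orbitWeight_pos (d i)).le)
      (orbitBound_pos _).le
    refine (mul_le_mul_of_nonneg_left hPE (orbitBound_pos _).le).trans ?_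
    interval_cases ∑ i ∈ s, d i <;> norm_num [orbitWeight]
  · have hPE := prod_orbitBound_mul_one_add_sum_le
      (Finset.nonempty_of_sum_ne_zero (f := d) (by omega)) hd
    obtain ⟨D, hD⟩ : ∃ D, ∑ i ∈ s, d i = D + 3 := Nat.exists_eq_add_of_le' (by omega)
    have hsq := sqrt_three_sq
    obtain ⟨hr, hr'⟩ := sqrt_three_bounds
    rw [hD] at hPE ⊢
    rw [orbitBound_succ (by omega), orbitWeight_of_three_le (by omega), Nat.add_succ_sub_one]
    rcases eq_or_ne D 0 with rfl | hD0
    · norm_num [pow_succ] at hPE ⊢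
      nlinarith
    · rw [orbitBound_succ (by omega)]
      calc √3 ^ (D + 1) * _ ≤ √3 ^ (D + 1) * ((√3 + 1) / 2 * √3 ^ (D + 3)) :=
            mul_le_mul_of_nonneg_left (by linarith) (by positivity)
        _ = (√3 ^ (D + 2)) ^ 2 * ((√3 + 1) / 2) := by ring

lemma one_add_orbitBound_mul_pair_le {a b : ℕ} (ha : a ≠ 0) (hb : b ≠ 0) :
    1 + orbitBound a * orbitBound b * (orbitWeight a + orbitWeight b) ≤ √3 ^ (a + b) := by
  have hsq := sqrt_three_sq
  obtain ⟨hr, hr'⟩ := sqrt_three_bounds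
  rw [pow_add]
  rcases orbit_constants_trichotomy ha with ⟨ha, hva, hpa⟩ | ⟨ha, hva, hpa⟩ | ⟨ha, hva, hpa⟩ <;>
  rcases orbit_constants_trichotomy hb with ⟨hb, hvb, hpb⟩ | ⟨hb, hvb, hpb⟩ | ⟨hb, hvb, hpb⟩ <;>
  rw [hpa, hpb, hva, hvb] <;> nlinarith [mul_nonneg (sub_nonneg.2 ha.ge) (sub_nonneg.2 hb.ge)]

lemma one_add_prod_mul_sum_le_pow {s : Finset ι} (hs : s.Nontrivial) {d : ι → ℕ}
    (hd : ∀ i ∈ s, d i ≠ 0) :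
    1 + (∏ i ∈ s, orbitBound (d i)) * ∑ i ∈ s, orbitWeight (d i) ≤ √3 ^ ∑ i ∈ s, d i := by
  induction s using Finset.cons_induction with
  | empty => simp at hs
  | cons i s hi ih =>
    have hdi : d i ≠ 0 := hd i (by simp)
    have hds : ∀ j ∈ s, d j ≠ 0 := fun j hj => hd j (by simp [hj])
    simp only [Finset.prod_cons, Finset.sum_cons]
    obtain rfl | hne := s.eq_empty_or_nonempty
    · simp at hs
    obtain ⟨j, rfl⟩ | hs' := hne.exists_eq_singleton_or_nontrivial
    · simpa using one_add_orbitBound_mul_pair_le hdi (hds j (by simp))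
    · have hcard : (2 : ℝ) ≤ s.card := by exact_mod_cast Finset.one_lt_card_iff_nontrivial.mpr hs'
      have hstep := orbitBound_mul_add_orbitWeight_le hdi
        (hcard.trans (card_le_sum_orbitWeight s d))
      have hP := one_le_prod_orbitBound s d
      have hr := one_le_sqrt_three_pow (d i)
      specialize ih hs' hds
      set P := ∏ j ∈ s, orbitBound (d j)
      set E := ∑ j ∈ s, orbitWeight (d j)
      calc 1 + orbitBound (d i) * P * (orbitWeight (d i) + E)
          = 1 + P * (orbitBound (d i) * (E + orbitWeight (d i))) := by ring
        _ ≤ 1 + P * (√3 ^ d i * E) := by gcongr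
        _ ≤ √3 ^ d i * (1 + P * E) := by linarith
        _ ≤ √3 ^ d i * √3 ^ ∑ j ∈ s, d j := by gcongr
        _ = √3 ^ (d i + ∑ j ∈ s, d j) := (pow_add _ _ _).symm

lemma one_add_orbitBound_mul_orbitWeight_le {d : ℕ} (hd : d ≠ 0) :
    1 + orbitBound d * orbitWeight d ≤ orbitBound (d + 1) := by
  have hr := sqrt_three_bounds.1
  obtain rfl | hd' := eq_or_ne d 1
  · norm_num
  rw [orbitBound_succ hd']
  obtain rfl | hd3 : d = 2 ∨ 3 ≤ d := by omega
  · norm_num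
  · rw [orbitWeight_of_three_le hd3, sqrt_three_pow_eq_mul_orbitBound hd3]
    nlinarith [three_le_orbitBound hd3]

lemma one_add_prod_mul_sum_le {s : Finset ι} {d : ι → ℕ} (hd : ∀ i ∈ s, d i ≠ 0) :
    1 + (∏ i ∈ s, orbitBound (d i)) * ∑ i ∈ s, orbitWeight (d i) ≤
      orbitBound (∑ i ∈ s, d i + 1) := by
  obtain rfl | hne := s.eq_empty_or_nonempty
  · simp
  obtain ⟨i, rfl⟩ | hs := hne.exists_eq_singleton_or_nontrivial
  · simpa using one_add_orbitBound_mul_orbitWeight_le (hd i (by simp))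
  · have hsum : s.card ≤ ∑ i ∈ s, d i := by
      simpa using s.card_nsmul_le_sum d 1 fun i hi => Nat.one_le_iff_ne_zero.mpr (hd i hi)
    have hcard := Finset.one_lt_card_iff_nontrivial.mpr hs
    rw [orbitBound_succ (by omega)]
    exact one_add_prod_mul_sum_le_pow hs hd

end OrbitConstants

section Orbits

open scoped Pointwise

variable {G Ω : Type*} [Group G] [MulAction G Ω]
  {A B N : Subgroup G} {S T : Finset Ω} {v w : Ω} {x : G}

lemma card_inf_mul_relIndex (K L : Subgroup G) :
    Nat.card ↥(K ⊓ L) * K.relIndex L = Nat.card L := by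
  have h := Subgroup.relIndex_mul_relIndex ⊥ (K ⊓ L) L bot_le inf_le_right
  rwa [Subgroup.relIndex_bot_left, Subgroup.relIndex_bot_left, Subgroup.inf_relIndex_right] at h

lemma le_stabilizer_sdiff [DecidableEq Ω] (hS : A ≤ stabilizer G (S : Set Ω))
    (hT : A ≤ stabilizer G (T : Set Ω)) :
    A ≤ stabilizer G ((S \ T : Finset Ω) : Set Ω) := by
  rw [Finset.coe_sdiff]
  exact (le_inf hS hT).trans stabilizer_inf_stabilizer_le_stabilizer_sdiff

variable [Finite G]

/-- The orbit of `w` under `A`, as a finite set. -/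
noncomputable def orbitFinset (A : Subgroup G) (w : Ω) : Finset Ω :=
  (Set.finite_range fun a : A => a • w).toFinset

lemma coe_orbitFinset (A : Subgroup G) (w : Ω) : (orbitFinset A w : Set Ω) = orbit A w :=
  Set.Finite.coe_toFinset _

lemma mem_orbitFinset : v ∈ orbitFinset A w ↔ ∃ a ∈ A, a • w = v := by
  simp [← Finset.mem_coe, coe_orbitFinset, mem_orbit_iff, Subgroup.smul_def]

lemma self_mem_orbitFinset (A : Subgroup G) (w : Ω) : w ∈ orbitFinset A w :=
  mem_orbitFinset.mpr ⟨1, A.one_mem, one_smul G w⟩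

lemma orbitFinset_eq_iff : orbitFinset A v = orbitFinset A w ↔ v ∈ orbitFinset A w := by
  rw [← Finset.coe_inj, ← Finset.mem_coe, coe_orbitFinset, coe_orbitFinset, orbit_eq_iff]

lemma orbitFinset_subset (hS : A ≤ stabilizer G (S : Set Ω)) (hw : w ∈ S) :
    orbitFinset A w ⊆ S := by
  intro v hv
  obtain ⟨a, ha, rfl⟩ := mem_orbitFinset.mp hv
  exact (mem_stabilizer_set.mp (hS ha) w).mpr hw

lemma orbitFinset_of_le_stabilizer (hA : A ≤ stabilizer G w) : orbitFinset A w = {w} := by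
  ext v
  rw [mem_orbitFinset, Finset.mem_singleton]
  exact ⟨fun ⟨a, ha, hav⟩ => hav ▸ hA ha, fun hv => ⟨1, A.one_mem, by rw [one_smul, hv]⟩⟩

lemma le_stabilizer_orbitFinset (A : Subgroup G) (w : Ω) :
    A ≤ stabilizer G (orbitFinset A w : Set Ω) := by
  intro a ha
  rw [mem_stabilizer_set, coe_orbitFinset]
  intro v
  change (⟨a, ha⟩ : A) • v ∈ orbit A w ↔ v ∈ orbit A w
  rw [← orbit_eq_iff, orbit_smul, orbit_eq_iff]

lemma card_orbitFinset_mul_card_stabilizer (A : Subgroup G) (w : Ω) :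
    (orbitFinset A w).card * Nat.card ↥(A ⊓ stabilizer G w) = Nat.card A := by
  have hstab : stabilizer A w = (A ⊓ stabilizer G w).subgroupOf A := by
    ext a
    simp [Subgroup.mem_subgroupOf, Subgroup.smul_def]
  have hcard := card_inf_mul_relIndex (A ⊓ stabilizer G w) A
  rwa [inf_eq_left.mpr inf_le_left, Subgroup.relIndex, ← hstab, index_stabilizer,
    ← coe_orbitFinset, Set.ncard_coe_finset, mul_comm] at hcard

lemma card_stabilizer_of_mem_orbitFinset (hv : v ∈ orbitFinset A w) :
    Nat.card ↥(A ⊓ stabilizer G v) = Nat.card ↥(A ⊓ stabilizer G w) := by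
  have hcard := card_orbitFinset_mul_card_stabilizer A v
  rw [orbitFinset_eq_iff.mpr hv, ← card_orbitFinset_mul_card_stabilizer A w] at hcard
  exact Nat.eq_of_mul_eq_mul_left (Finset.card_pos.mpr ⟨v, hv⟩) hcard

lemma sum_card_stabilizer_orbitFinset (A : Subgroup G) (w : Ω) :
    ∑ v ∈ orbitFinset A w, Nat.card ↥(A ⊓ stabilizer G v) = Nat.card A := by
  rw [Finset.sum_congr rfl fun v hv => card_stabilizer_of_mem_orbitFinset hv, Finset.sum_const,
    smul_eq_mul, card_orbitFinset_mul_card_stabilizer]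

variable [DecidableEq Ω]

lemma le_stabilizer_erase (hS : A ≤ stabilizer G (S : Set Ω)) (hw : A ≤ stabilizer G w) :
    A ≤ stabilizer G (S.erase w : Set Ω) := by
  rw [← Finset.sdiff_singleton_eq_erase]
  refine le_stabilizer_sdiff hS ?_
  rw [← orbitFinset_of_le_stabilizer hw]
  exact le_stabilizer_orbitFinset A w

/-- The orbits of `A` on an `A`-invariant finite set `S`. -/
noncomputable def orbitsIn (A : Subgroup G) (S : Finset Ω) : Finset (Finset Ω) :=
  S.image (orbitFinset A)

lemma orbitsIn_orbitFinset (A : Subgroup G) (w : Ω) :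
    orbitsIn A (orbitFinset A w) = {orbitFinset A w} := by
  rw [orbitsIn, Finset.image_congr fun v hv => orbitFinset_eq_iff.mpr hv]
  exact Finset.image_const ⟨w, self_mem_orbitFinset A w⟩ _

lemma card_ne_zero_of_mem_orbitsIn {o : Finset Ω} (ho : o ∈ orbitsIn A S) : o.card ≠ 0 := by
  obtain ⟨w, -, rfl⟩ := Finset.mem_image.mp ho
  exact Finset.card_ne_zero_of_mem (self_mem_orbitFinset A w)

lemma disjoint_orbitsIn_sdiff (hT : A ≤ stabilizer G (T : Set Ω)) (S : Finset Ω) :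
    Disjoint (orbitsIn A T) (orbitsIn A (S \ T)) := by
  simp only [orbitsIn, Finset.disjoint_left, Finset.forall_mem_image]
  intro t ht hmem
  obtain ⟨s, hs, hst⟩ := Finset.mem_image.mp hmem
  exact (Finset.mem_sdiff.mp hs).2 (orbitFinset_subset hT ht (orbitFinset_eq_iff.mp hst))

lemma orbitsIn_union_sdiff (A : Subgroup G) (hTS : T ⊆ S) :
    orbitsIn A T ∪ orbitsIn A (S \ T) = orbitsIn A S := by
  rw [orbitsIn, orbitsIn, ← Finset.image_union, Finset.union_sdiff_of_subset hTS, orbitsIn]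

lemma filter_orbitFinset_eq (hS : A ≤ stabilizer G (S : Set Ω)) (hw : w ∈ S) :
    {v ∈ S | orbitFinset A v = orbitFinset A w} = orbitFinset A w := by
  ext v
  rw [Finset.mem_filter, orbitFinset_eq_iff]
  exact and_iff_right_of_imp fun hv => orbitFinset_subset hS hw hv

lemma sum_card_orbitsIn (hS : A ≤ stabilizer G (S : Set Ω)) :
    ∑ o ∈ orbitsIn A S, o.card = S.card := by
  rw [Finset.card_eq_sum_ones]
  refine Finset.sum_image' _ fun w hw => ?_
  rw [filter_orbitFinset_eq hS hw, Finset.card_eq_sum_ones]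

lemma sum_card_stabilizer_mul (hS : A ≤ stabilizer G (S : Set Ω)) (f : Finset Ω → ℝ) :
    ∑ w ∈ S, Nat.card ↥(A ⊓ stabilizer G w) * f (orbitFinset A w) =
      Nat.card A * ∑ o ∈ orbitsIn A S, f o := by
  rw [Finset.mul_sum]
  refine (Finset.sum_image' _ fun w hw => ?_).symm
  have hconst : ∀ v ∈ orbitFinset A w,
      Nat.card ↥(A ⊓ stabilizer G v) * f (orbitFinset A v) =
        Nat.card ↥(A ⊓ stabilizer G w) * f (orbitFinset A w) := by
    intro v hv
    rw [card_stabilizer_of_mem_orbitFinset hv, orbitFinset_eq_iff.mpr hv]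
  rw [filter_orbitFinset_eq hS hw, Finset.sum_congr rfl hconst, Finset.sum_const, nsmul_eq_mul,
    ← mul_assoc, ← card_orbitFinset_mul_card_stabilizer A w, Nat.cast_mul]

lemma orbitFinset_conj_smul (x : G) (A : Subgroup G) (w : Ω) :
    orbitFinset (MulAut.conj x • A) (x • w) = x • orbitFinset A w := by
  ext v
  simp only [mem_orbitFinset, Finset.mem_smul_finset, Subgroup.mem_pointwise_smul_iff_inv_smul_mem]
  constructor
  · rintro ⟨a, ha, rfl⟩
    exact ⟨_, ⟨_, ha, rfl⟩, by simp [← mul_smul, mul_assoc]⟩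
  · rintro ⟨_, ⟨a, ha, rfl⟩, rfl⟩
    exact ⟨x * a * x⁻¹, by simpa [mul_assoc] using ha, by simp [← mul_smul, mul_assoc]⟩

lemma orbitsIn_conj_smul (x : G) (A : Subgroup G) (S : Finset Ω) :
    orbitsIn (MulAut.conj x • A) (x • S) = (orbitsIn A S).image (x • ·) := by
  simp only [orbitsIn, Finset.smul_finset_def, Finset.image_image]
  exact Finset.image_congr fun w _ => orbitFinset_conj_smul x A w

/-- The product over the orbits of `A` on `S` of the class number bound for each orbit. -/
noncomputable def orbitBoundProd (A : Subgroup G) (S : Finset Ω) : ℝ :=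
  ∏ o ∈ orbitsIn A S, orbitBound o.card

/-- The total weight of the orbits of `A` on `S`. -/
noncomputable def orbitWeightSum (A : Subgroup G) (S : Finset Ω) : ℝ :=
  ∑ o ∈ orbitsIn A S, orbitWeight o.card

lemma orbitBoundProd_pos (A : Subgroup G) (S : Finset Ω) : 0 < orbitBoundProd A S :=
  Finset.prod_pos fun _ _ => orbitBound_pos _

lemma orbitWeightSum_nonneg (A : Subgroup G) (S : Finset Ω) : 0 ≤ orbitWeightSum A S :=
  Finset.sum_nonneg fun _ _ => (orbitWeight_pos _).le

lemma orbitBoundProd_eq_mul (hT : A ≤ stabilizer G (T : Set Ω)) (hTS : T ⊆ S) :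
    orbitBoundProd A S = orbitBoundProd A T * orbitBoundProd A (S \ T) := by
  rw [orbitBoundProd, ← orbitsIn_union_sdiff A hTS,
    Finset.prod_union (disjoint_orbitsIn_sdiff hT S), orbitBoundProd, orbitBoundProd]

lemma orbitWeightSum_eq_add (hT : A ≤ stabilizer G (T : Set Ω)) (hTS : T ⊆ S) :
    orbitWeightSum A S = orbitWeightSum A T + orbitWeightSum A (S \ T) := by
  rw [orbitWeightSum, ← orbitsIn_union_sdiff A hTS,
    Finset.sum_union (disjoint_orbitsIn_sdiff hT S), orbitWeightSum, orbitWeightSum]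

lemma orbitBoundProd_orbitFinset (A : Subgroup G) (w : Ω) :
    orbitBoundProd A (orbitFinset A w) = orbitBound (orbitFinset A w).card := by
  rw [orbitBoundProd, orbitsIn_orbitFinset, Finset.prod_singleton]

lemma orbitWeightSum_orbitFinset (A : Subgroup G) (w : Ω) :
    orbitWeightSum A (orbitFinset A w) = orbitWeight (orbitFinset A w).card := by
  rw [orbitWeightSum, orbitsIn_orbitFinset, Finset.sum_singleton]

lemma orbitBoundProd_erase (hA : A ≤ stabilizer G w) (hw : w ∈ S) :
    orbitBoundProd A (S.erase w) = orbitBoundProd A S := by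
  have hS := orbitBoundProd_eq_mul (le_stabilizer_orbitFinset A w)
    (orbitFinset_of_le_stabilizer hA ▸ Finset.singleton_subset_iff.mpr hw)
  rw [hS, orbitBoundProd_orbitFinset, orbitFinset_of_le_stabilizer hA, Finset.card_singleton,
    orbitBound_one, one_mul, Finset.sdiff_singleton_eq_erase]

lemma orbitWeightSum_eq_one_add_erase (hA : A ≤ stabilizer G w) (hw : w ∈ S) :
    orbitWeightSum A S = 1 + orbitWeightSum A (S.erase w) := by
  have hS := orbitWeightSum_eq_add (le_stabilizer_orbitFinset A w)
    (orbitFinset_of_le_stabilizer hA ▸ Finset.singleton_subset_iff.mpr hw)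
  rw [hS, orbitWeightSum_orbitFinset, orbitFinset_of_le_stabilizer hA, Finset.card_singleton,
    orbitWeight_one, Finset.sdiff_singleton_eq_erase]

lemma orbitBoundProd_le (hS : A ≤ stabilizer G (S : Set Ω)) :
    orbitBoundProd A S ≤ orbitBound S.card :=
  (prod_orbitBound_le _ _).trans_eq (by rw [sum_card_orbitsIn hS])

lemma orbitBoundProd_mono (hNA : N ≤ A) (hS : A ≤ stabilizer G (S : Set Ω)) :
    orbitBoundProd N S ≤ orbitBoundProd A S := by
  induction S using Finset.strongInduction with
  | H S ih =>
    obtain rfl | ⟨w, hw⟩ := S.eq_empty_or_nonempty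
    · simp [orbitBoundProd, orbitsIn]
    have horb := le_stabilizer_orbitFinset A w
    have hsub := orbitFinset_subset hS hw
    rw [orbitBoundProd_eq_mul horb hsub, orbitBoundProd_eq_mul (hNA.trans horb) hsub,
      orbitBoundProd_orbitFinset]
    exact mul_le_mul (orbitBoundProd_le (hNA.trans horb))
      (ih _ (Finset.sdiff_ssubset hsub ⟨w, self_mem_orbitFinset A w⟩) (le_stabilizer_sdiff hS horb))
      (orbitBoundProd_pos _ _).le (orbitBound_pos _).le

lemma orbitBoundProd_conj_smul (A : Subgroup G) (hx : x ∈ stabilizer G (S : Set Ω)) :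
    orbitBoundProd (MulAut.conj x • A) S = orbitBoundProd A S := by
  have hxS : x • S = S := by
    rw [← Finset.coe_inj, Finset.coe_smul_finset]
    exact hx
  conv_lhs => rw [← hxS, orbitBoundProd, orbitsIn_conj_smul]
  rw [Finset.prod_image fun o _ o' _ => smul_left_cancel x]
  simp [orbitBoundProd]

lemma orbitBoundProd_mul_orbitWeightSum_le_of_mem (hS : B ≤ stabilizer G (S : Set Ω))
    (hw : w ∈ S) (hv : v ∈ orbitFinset B w) :
    orbitBoundProd (B ⊓ stabilizer G v) S *
        orbitWeightSum (B ⊓ stabilizer G v) (orbitFinset B w) ≤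
      orbitWeight (orbitFinset B w).card * orbitBoundProd B S := by
  set N := B ⊓ stabilizer G v
  set Γ := orbitFinset B w with hΓ
  have hNB : N ≤ B := inf_le_left
  have hNv : N ≤ stabilizer G v := inf_le_right
  have hBΓ := le_stabilizer_orbitFinset B w
  have hΓS : Γ ⊆ S := orbitFinset_subset hS hw
  have hbound : orbitBoundProd N Γ * orbitWeightSum N Γ ≤
      orbitBound Γ.card * orbitWeight Γ.card := by
    rw [← orbitBoundProd_erase hNv hv, orbitWeightSum_eq_one_add_erase hNv hv,
      ← Finset.card_erase_add_one hv,
      ← sum_card_orbitsIn (le_stabilizer_erase (hNB.trans hBΓ) hNv)]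
    exact prod_orbitBound_mul_one_add_sum_le_succ fun _ => card_ne_zero_of_mem_orbitsIn
  rw [orbitBoundProd_eq_mul (hNB.trans hBΓ) hΓS, orbitBoundProd_eq_mul hBΓ hΓS,
    orbitBoundProd_orbitFinset, ← hΓ]
  calc orbitBoundProd N Γ * orbitBoundProd N (S \ Γ) * orbitWeightSum N Γ
      = orbitBoundProd N Γ * orbitWeightSum N Γ * orbitBoundProd N (S \ Γ) := by ring
    _ ≤ orbitBound Γ.card * orbitWeight Γ.card * orbitBoundProd B (S \ Γ) :=
        mul_le_mul hbound (orbitBoundProd_mono hNB (le_stabilizer_sdiff hS hBΓ))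
          (orbitBoundProd_pos _ _).le (mul_pos (orbitBound_pos _) (orbitWeight_pos _)).le
    _ = orbitWeight Γ.card * (orbitBound Γ.card * orbitBoundProd B (S \ Γ)) := by ring

lemma orbitBoundProd_stabilizer_orbitFinset_le (B : Subgroup G) (v : Ω) :
    orbitBoundProd (B ⊓ stabilizer G v) (orbitFinset B v) ≤
      orbitBound ((orbitFinset B v).card - 1) := by
  have hv := self_mem_orbitFinset B v
  rw [← orbitBoundProd_erase inf_le_right hv, ← Finset.card_erase_of_mem hv]
  exact orbitBoundProd_le (le_stabilizer_erase
    (inf_le_left.trans (le_stabilizer_orbitFinset B v)) inf_le_right)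

lemma orbitBoundProd_mul_orbitWeightSum_le_of_notMem (hS : B ≤ stabilizer G (S : Set Ω))
    (hw : w ∈ S) (hvS : v ∈ S) (hv : v ∉ orbitFinset B w)
    (hcard : (orbitFinset B v).card = (orbitFinset B w).card) :
    orbitBoundProd (B ⊓ stabilizer G v) S *
        orbitWeightSum (B ⊓ stabilizer G v) (orbitFinset B w) ≤
      orbitWeight (orbitFinset B w).card * orbitBoundProd B S := by
  have hNΔ := orbitBoundProd_stabilizer_orbitFinset_le B v
  set N := B ⊓ stabilizer G v
  set Γ := orbitFinset B w with hΓ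
  set Δ := orbitFinset B v with hΔ
  have hNB : N ≤ B := inf_le_left
  have hBΓ := le_stabilizer_orbitFinset B w
  have hBΔ := le_stabilizer_orbitFinset B v
  have hΓS : Γ ⊆ S := orbitFinset_subset hS hw
  have hBSΓ := le_stabilizer_sdiff hS hBΓ
  have hΔSΓ : Δ ⊆ S \ Γ := orbitFinset_subset hBSΓ (Finset.mem_sdiff.mpr ⟨hvS, hv⟩)
  have hbound : orbitBound (Γ.card - 1) * (orbitBoundProd N Γ * orbitWeightSum N Γ) ≤
      orbitBound Γ.card ^ 2 * orbitWeight Γ.card := by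
    rw [← sum_card_orbitsIn (hNB.trans hBΓ)]
    exact orbitBound_pred_mul_prod_mul_sum_le fun _ => card_ne_zero_of_mem_orbitsIn
  rw [orbitBoundProd_eq_mul (hNB.trans hBΓ) hΓS, orbitBoundProd_eq_mul hBΓ hΓS,
    orbitBoundProd_eq_mul (hNB.trans hBΔ) hΔSΓ, orbitBoundProd_eq_mul hBΔ hΔSΓ,
    orbitBoundProd_orbitFinset, orbitBoundProd_orbitFinset, ← hΓ, ← hΔ, hcard]
  rw [hcard] at hNΔ
  calc orbitBoundProd N Γ * (orbitBoundProd N Δ * orbitBoundProd N ((S \ Γ) \ Δ)) *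
        orbitWeightSum N Γ
      = orbitBoundProd N Δ * (orbitBoundProd N Γ * orbitWeightSum N Γ) *
          orbitBoundProd N ((S \ Γ) \ Δ) := by ring
    _ ≤ orbitBound (Γ.card - 1) * (orbitBoundProd N Γ * orbitWeightSum N Γ) *
          orbitBoundProd B ((S \ Γ) \ Δ) := by
        have hE := mul_nonneg (orbitBoundProd_pos N Γ).le (orbitWeightSum_nonneg N Γ)
        exact mul_le_mul (mul_le_mul_of_nonneg_right hNΔ hE)
          (orbitBoundProd_mono hNB (le_stabilizer_sdiff hBSΓ hBΔ))
          (orbitBoundProd_pos _ _).le (mul_nonneg (orbitBound_pos _).le hE)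
    _ ≤ orbitBound Γ.card ^ 2 * orbitWeight Γ.card * orbitBoundProd B ((S \ Γ) \ Δ) :=
        mul_le_mul_of_nonneg_right hbound (orbitBoundProd_pos _ _).le
    _ = orbitWeight Γ.card *
          (orbitBound Γ.card * (orbitBound Γ.card * orbitBoundProd B ((S \ Γ) \ Δ))) := by ring

lemma orbitBoundProd_mul_orbitWeightSum_le (hS : B ≤ stabilizer G (S : Set Ω))
    (hv : v ∈ S) (hw : w ∈ S) (hcard : (orbitFinset B v).card = (orbitFinset B w).card) :
    orbitBoundProd (B ⊓ stabilizer G v) S *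
        orbitWeightSum (B ⊓ stabilizer G v) (orbitFinset B w) ≤
      orbitWeight (orbitFinset B w).card * orbitBoundProd B S :=
  (em (v ∈ orbitFinset B w)).elim (orbitBoundProd_mul_orbitWeightSum_le_of_mem hS hw)
    (orbitBoundProd_mul_orbitWeightSum_le_of_notMem hS hw hv · hcard)

end Orbits

section CommutingPairs

open scoped Pointwise

variable {G : Type*} [Group G] [Fintype G] {A H K : Subgroup G} {X X' Y Y' : Set G}

open Classical in
/-- The number of commuting pairs in `X × Y`. -/
noncomputable def commPairs (X Y : Set G) : ℕ :=
  Finset.card {p : G × G | p.1 ∈ X ∧ p.2 ∈ Y ∧ Commute p.1 p.2}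

open Classical in
lemma commPairs_eq_sum (X Y : Set G) :
    commPairs X Y = ∑ y with y ∈ Y, Finset.card {x | x ∈ X ∧ Commute x y} := by
  rw [commPairs, Finset.card_filter, Fintype.sum_prod_type_right, Finset.sum_filter]
  refine Finset.sum_congr rfl fun y _ => ?_
  split_ifs with hy <;> simp [hy]

lemma commPairs_comm (X Y : Set G) : commPairs X Y = commPairs Y X := by
  classical
  exact Finset.card_equiv (Equiv.prodComm G G) fun p => by simp [Commute.symm_iff, and_left_comm]

lemma commPairs_mono (hX : X ⊆ X') (hY : Y ⊆ Y') : commPairs X Y ≤ commPairs X' Y' := by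
  classical
  exact Finset.card_le_card <| Finset.monotone_filter_right _ fun _ _ hp =>
    ⟨hX hp.1, hY hp.2.1, hp.2.2⟩

lemma commPairs_le_sum {ι : Type*} {s : Finset ι} {Z W : ι → Set G}
    (h : ∀ x ∈ X, ∀ y ∈ Y, Commute x y → ∃ i ∈ s, x ∈ Z i ∧ y ∈ W i) :
    commPairs X Y ≤ ∑ i ∈ s, commPairs (Z i) (W i) := by
  classical
  refine (Finset.card_le_card fun p hp => ?_).trans Finset.card_biUnion_le
  simp only [Finset.mem_filter_univ, Finset.mem_biUnion] at hp ⊢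
  obtain ⟨i, hi, hx, hy⟩ := h _ hp.1 _ hp.2.1 hp.2.2
  exact ⟨i, hi, hx, hy, hp.2.2⟩

open Classical in
lemma commPairs_subgroup_eq_sum (A : Subgroup G) (X : Set G) :
    commPairs A X = ∑ x with x ∈ X, Nat.card ↥(A ⊓ Subgroup.centralizer {x}) := by
  rw [commPairs_eq_sum]
  refine Finset.sum_congr rfl fun x _ => ?_
  rw [Nat.card_eq_fintype_card, Fintype.card_subtype]
  congr 1
  ext a
  simp [Subgroup.mem_centralizer_singleton_iff, commute_iff_eq]

lemma commPairs_self (A : Subgroup G) :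
    commPairs (A : Set G) A = Nat.card (ConjClasses A) * Nat.card A := by
  classical
  rw [← card_comm_eq_card_conjClasses_mul_card, commPairs, ← Fintype.card_subtype,
    ← Nat.card_eq_fintype_card]
  exact Nat.card_congr
    { toFun p := ⟨(⟨p.1.1, p.2.1⟩, ⟨p.1.2, p.2.2.1⟩), Subtype.ext p.2.2.2⟩
      invFun p := ⟨(p.1.1, p.1.2), p.1.1.2, p.1.2.2, congrArg Subtype.val p.2⟩
      left_inv _ := rfl
      right_inv _ := rfl }

lemma commPairs_leftCoset_le (A : Subgroup G) (x : G) :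
    commPairs A (x • (A : Set G)) ≤ commPairs (A : Set G) A := by
  classical
  rw [commPairs_comm, commPairs_eq_sum, commPairs_comm, commPairs_eq_sum]
  refine Finset.sum_le_sum fun a _ => ?_
  obtain hempty | ⟨y, hy⟩ := Finset.eq_empty_or_nonempty
    {y | y ∈ x • (A : Set G) ∧ Commute y a}
  · simp [hempty]
  simp only [Finset.mem_filter_univ, mem_leftCoset_iff] at hy
  refine Finset.card_le_card_of_injOn (y⁻¹ * ·) (fun z hz => ?_) (mul_right_injective _).injOn
  simp only [Finset.coe_filter_univ, Set.mem_ofPred_eq, mem_leftCoset_iff] at hz ⊢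
  refine ⟨?_, hy.2.inv_left.mul_left hz.2⟩
  simpa [mul_assoc] using A.mul_mem (A.inv_mem hy.1) hz.1

lemma card_mul_commPairs_le (hKH : K ≤ H) :
    Nat.card K * commPairs (K : Set G) H ≤ Nat.card H * commPairs (K : Set G) K := by
  rw [commPairs_comm (K : Set G) H, commPairs_subgroup_eq_sum, commPairs_subgroup_eq_sum,
    Finset.mul_sum, Finset.mul_sum]
  refine Finset.sum_le_sum fun x _ => ?_
  set C := Subgroup.centralizer {x}
  have hC := card_inf_mul_relIndex K (H ⊓ C)
  have hH := card_inf_mul_relIndex K H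
  have hindex : K.relIndex (H ⊓ C) ≤ K.relIndex H :=
    Subgroup.relIndex_le_of_le_right inf_le_left
      (right_ne_zero_of_mul (hH.trans_ne Nat.card_pos.ne'))
  rw [← inf_assoc, inf_eq_left.mpr hKH] at hC
  rw [inf_eq_left.mpr hKH] at hH
  calc Nat.card K * Nat.card ↥(H ⊓ C)
      = Nat.card K * (Nat.card ↥(K ⊓ C) * K.relIndex (H ⊓ C)) := by rw [hC]
    _ ≤ Nat.card K * (Nat.card ↥(K ⊓ C) * K.relIndex H) := by gcongr
    _ = Nat.card H * Nat.card ↥(K ⊓ C) := by rw [← hH]; ring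

lemma commPairs_le_card_mul (hKH : K ≤ H) :
    commPairs (H : Set G) K ≤ Nat.card H * Nat.card (ConjClasses K) := by
  refine Nat.le_of_mul_le_mul_left ?_ (Nat.card_pos (α := K))
  calc Nat.card K * commPairs (H : Set G) K ≤ Nat.card H * commPairs (K : Set G) K := by
        rw [commPairs_comm]; exact card_mul_commPairs_le hKH
    _ = Nat.card K * (Nat.card H * Nat.card (ConjClasses K)) := by rw [commPairs_self]; ring

variable {Ω : Type*} [MulAction G Ω] {S Γ : Finset Ω} {t : Ω}

lemma commPairs_leftCoset_le_of_le_stabilizer {C : ℝ}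
    (hk : (Nat.card (ConjClasses A) : ℝ) ≤ C) (ht : A ≤ stabilizer G t) (x : G) :
    (commPairs ↑(A ⊓ stabilizer G t) (x • (A : Set G)) : ℝ) ≤
      Nat.card ↥(A ⊓ stabilizer G t) * (C * orbitWeight (orbitFinset A t).card) := by
  rw [inf_eq_left.mpr ht, orbitFinset_of_le_stabilizer ht, Finset.card_singleton, orbitWeight_one,
    mul_one]
  calc (commPairs A (x • (A : Set G)) : ℝ) ≤ Nat.card (ConjClasses A) * Nat.card A := by
        exact_mod_cast (commPairs_leftCoset_le A x).trans_eq (commPairs_self A)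
    _ ≤ C * Nat.card A := by gcongr
    _ = Nat.card A * C := mul_comm _ _

lemma commPairs_le_fixed_add_moved (X : Set G) (A : Subgroup G) (S : Finset Ω) :
    commPairs X A ≤ commPairs X ↑(A ⊓ fixingSubgroup G (S : Set Ω)) +
      commPairs X {x ∈ (A : Set G) | ∃ w ∈ S, x • w ≠ w} := by
  classical
  refine (Finset.card_le_card fun p hp => ?_).trans (Finset.card_union_le _ _)
  obtain ⟨hpX, hpA, hcomm⟩ := (Finset.mem_filter_univ p).mp hp
  simp only [Finset.mem_union, Finset.mem_filter_univ]
  by_cases hmoved : ∃ w ∈ S, p.2 • w ≠ w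
  · exact .inr ⟨hpX, ⟨hpA, hmoved⟩, hcomm⟩
  · push Not at hmoved
    exact .inl ⟨hpX, ⟨hpA, (mem_fixingSubgroup_iff G).mpr hmoved⟩, hcomm⟩

-- If `x` moves `w`, it moves every point of the orbit of `w` under the centralizer of `x`.
lemma commPairs_moved_le (hS : A ≤ stabilizer G (S : Set Ω)) (X : Set G) :
    commPairs A {x ∈ X | ∃ w ∈ S, x • w ≠ w} ≤
      ∑ w ∈ S, commPairs ↑(A ⊓ stabilizer G w) {x ∈ X | x • w ≠ w} := by
  classical
  simp only [commPairs_subgroup_eq_sum, Set.mem_ofPred_eq, Finset.sum_filter]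
  rw [Finset.sum_comm]
  refine Finset.sum_le_sum fun x _ => ?_
  split_ifs with hx
  swap
  · exact Nat.zero_le _
  obtain ⟨hxX, w, hwS, hxw⟩ := hx
  set C := A ⊓ Subgroup.centralizer {x}
  have hsub : orbitFinset C w ⊆ {v ∈ S | x ∈ X ∧ x • v ≠ v} := by
    intro v hv
    obtain ⟨c, hc, rfl⟩ := mem_orbitFinset.mp hv
    have hcx : c * x = x * c := Subgroup.mem_centralizer_singleton_iff.mp hc.2
    refine Finset.mem_filter.mpr ⟨(mem_stabilizer_set.mp (hS hc.1) w).mpr hwS, hxX, ?_⟩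
    rwa [← mul_smul, ← hcx, mul_smul, (MulAction.injective c).ne_iff]
  rw [← sum_card_stabilizer_orbitFinset C w, ← Finset.sum_filter]
  refine (Finset.sum_le_sum_of_subset hsub).trans_eq (Finset.sum_congr rfl fun v _ => ?_)
  rw [inf_right_comm]

variable [DecidableEq Ω]

lemma commPairs_le_card_mul_orbitWeightSum {C : ℝ} (hC : 0 ≤ C)
    (hX : ∀ x ∈ X, ∀ y ∈ X, x⁻¹ * y ∈ A) (hXΓ : ∀ x ∈ X, x • t ∈ Γ)
    (hΓ : A ⊓ stabilizer G t ≤ stabilizer G (Γ : Set Ω))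
    (hfiber : ∀ x ∈ X,
      (commPairs ↑(A ⊓ stabilizer G t ⊓ stabilizer G (x • t))
          (x • (↑(A ⊓ stabilizer G t) : Set G)) : ℝ) ≤
        Nat.card ↥(A ⊓ stabilizer G t ⊓ stabilizer G (x • t)) *
          (C * orbitWeight (orbitFinset (A ⊓ stabilizer G t) (x • t)).card)) :
    (commPairs ↑(A ⊓ stabilizer G t) X : ℝ) ≤
      Nat.card ↥(A ⊓ stabilizer G t) * (C * orbitWeightSum (A ⊓ stabilizer G t) Γ) := by
  set N := A ⊓ stabilizer G t with hN
  have hcover : commPairs N X ≤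
      ∑ s ∈ Γ, commPairs ↑(N ⊓ stabilizer G s) {x ∈ X | x • t = s} := by
    refine commPairs_le_sum fun a ha x hx hax => ⟨x • t, hXΓ x hx, ⟨ha, ?_⟩, hx, rfl⟩
    have hat : a • t = t := ha.2
    change a • x • t = x • t
    rw [← mul_smul, hax.eq, mul_smul, hat]
  have hterm : ∀ s ∈ Γ, (commPairs ↑(N ⊓ stabilizer G s) {x ∈ X | x • t = s} : ℝ) ≤
      Nat.card ↥(N ⊓ stabilizer G s) * (C * orbitWeight (orbitFinset N s).card) := by
    intro s _
    obtain hempty | ⟨x, hx, rfl⟩ := Set.eq_empty_or_nonempty {x ∈ X | x • t = s}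
    · have := orbitWeight_pos (orbitFinset N s).card
      rw [hempty]
      simp only [commPairs, Set.mem_empty_iff_false, false_and, and_false, Finset.filter_false,
        Finset.card_empty, Nat.cast_zero]
      positivity
    · refine le_trans (Nat.cast_le.mpr (commPairs_mono subset_rfl ?_)) (hfiber x hx)
      rintro y ⟨hy, hyt⟩
      rw [mem_leftCoset_iff, SetLike.mem_coe, hN]
      refine ⟨hX x hx y hy, ?_⟩
      change (x⁻¹ * y) • t = t
      rw [mul_smul, hyt, inv_smul_smul]
  calc (commPairs N X : ℝ)
      ≤ ∑ s ∈ Γ, (commPairs ↑(N ⊓ stabilizer G s) {x ∈ X | x • t = s} : ℝ) := by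
        exact_mod_cast hcover
    _ ≤ _ := Finset.sum_le_sum hterm
    _ = Nat.card N * ∑ o ∈ orbitsIn N Γ, C * orbitWeight o.card :=
        sum_card_stabilizer_mul hΓ fun o => C * orbitWeight o.card
    _ = Nat.card N * (C * orbitWeightSum N Γ) := by rw [← Finset.mul_sum, orbitWeightSum]

end CommutingPairs

section TransitiveStep

open scoped Pointwise

variable {G Ω : Type*} [Group G] [MulAction G Ω] {A H K : Subgroup G} {O : Finset Ω}
  {t v w : Ω} {x : G} {C κ : ℝ}

lemma conj_smul_inf_stabilizer (x : G) (A : Subgroup G) (t : Ω) :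
    MulAut.conj x • (A ⊓ stabilizer G t) = (MulAut.conj x • A) ⊓ stabilizer G (x • t) := by
  rw [Subgroup.smul_inf, stabilizer_smul_eq_stabilizer_map_conj]
  rfl

lemma conj_smul_eq_of_mem_leftCoset {y : G} (hy : y ∈ x • (A : Set G)) :
    MulAut.conj y • A = MulAut.conj x • A := by
  obtain ⟨a, ha, rfl⟩ := Set.mem_smul_set.mp hy
  rw [smul_eq_mul, map_mul, mul_smul, Subgroup.conj_smul_eq_self_of_mem ha]

variable [DecidableEq Ω]

lemma inf_fixingSubgroup_erase (hKA : H ⊓ fixingSubgroup G (O : Set Ω) ≤ A) (hAH : A ≤ H)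
    (hAw : A ≤ stabilizer G w) :
    A ⊓ fixingSubgroup G (O.erase w : Set Ω) = H ⊓ fixingSubgroup G (O : Set Ω) := by
  refine le_antisymm (le_inf (inf_le_left.trans hAH) fun g hg => ?_)
    (le_inf hKA (inf_le_right.trans (fixingSubgroup_antitone G Ω (O.erase_subset w))))
  rw [mem_fixingSubgroup_iff]
  intro v hv
  obtain rfl | hvw := eq_or_ne v w
  · exact hAw hg.1
  · exact (mem_fixingSubgroup_iff G).mp hg.2 v (Finset.mem_erase.mpr ⟨hvw, hv⟩)

lemma orbitBoundProd_mul_orbitWeightSum_conj_le [Finite G] (hA : A ≤ stabilizer G (O : Set Ω))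
    (hx : x ∈ stabilizer G (O : Set Ω)) (ht : t ∈ O) (hv : v ∈ O)
    (hstab : A ⊓ stabilizer G t = (MulAut.conj x • A) ⊓ stabilizer G v) :
    orbitBoundProd (A ⊓ stabilizer G t) O *
        orbitWeightSum (A ⊓ stabilizer G t) (orbitFinset (MulAut.conj x • A) (x • t)) ≤
      orbitWeight (orbitFinset A t).card * orbitBoundProd A O := by
  have hB : MulAut.conj x • A ≤ stabilizer G (O : Set Ω) := by
    rw [← Subgroup.conj_smul_eq_self_of_mem hx]
    exact Subgroup.pointwise_smul_le_pointwise_smul_iff.mpr hA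
  have horb : (orbitFinset (MulAut.conj x • A) (x • t)).card = (orbitFinset A t).card := by
    rw [orbitFinset_conj_smul, Finset.card_smul_finset]
  have hcard : (orbitFinset (MulAut.conj x • A) v).card = (orbitFinset A t).card := by
    refine Nat.eq_of_mul_eq_mul_right (Nat.card_pos (α := ↥(A ⊓ stabilizer G t))) ?_
    rw [card_orbitFinset_mul_card_stabilizer, hstab, card_orbitFinset_mul_card_stabilizer]
    exact (Nat.card_congr (Subgroup.equivSMul (MulAut.conj x) A).toEquiv).symm
  have hkey := orbitBoundProd_mul_orbitWeightSum_le hB hv ((mem_stabilizer_set.mp hx t).mpr ht)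
    (hcard.trans horb.symm)
  rwa [← hstab, orbitBoundProd_conj_smul A hx, horb] at hkey

variable [Fintype G]

lemma commPairs_leftCoset_le_orbitWeightSum (hC : 0 ≤ C)
    (hAt : A ⊓ stabilizer G t ≤ MulAut.conj x • A)
    (hfiber : ∀ y ∈ x • (A : Set G),
      (commPairs ↑(A ⊓ stabilizer G t ⊓ stabilizer G (y • t))
          (y • (↑(A ⊓ stabilizer G t) : Set G)) : ℝ) ≤
        Nat.card ↥(A ⊓ stabilizer G t ⊓ stabilizer G (y • t)) *
          (C * orbitWeight (orbitFinset (A ⊓ stabilizer G t) (y • t)).card)) :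
    (commPairs ↑(A ⊓ stabilizer G t) (x • (A : Set G)) : ℝ) ≤
      Nat.card ↥(A ⊓ stabilizer G t) *
        (C * orbitWeightSum (A ⊓ stabilizer G t) (orbitFinset (MulAut.conj x • A) (x • t))) := by
  refine commPairs_le_card_mul_orbitWeightSum hC (fun y hy z hz => ?_) (fun y hy => ?_)
    (hAt.trans (le_stabilizer_orbitFinset _ _)) hfiber
  · rw [mem_leftCoset_iff] at hy hz
    simpa [mul_assoc] using A.mul_mem (A.inv_mem hy) hz
  · obtain ⟨a, ha, rfl⟩ := Set.mem_smul_set.mp hy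
    rw [orbitFinset_conj_smul, smul_eq_mul, mul_smul]
    exact Finset.smul_mem_smul_finset (mem_orbitFinset.mpr ⟨a, ha, rfl⟩)

-- `A` is the pointwise stabilizer of the first points of the chain `v, x • v, x ^ 2 • v, …` and
-- `t` is the next point, so that `hstab` expresses the shift of the chain by `x`.
lemma commPairs_leftCoset_le_orbitBoundProd (hO : H ≤ stabilizer G (O : Set Ω)) (hv : v ∈ O)
    (hK : K ≤ fixingSubgroup G (O : Set Ω)) (hκ : 0 ≤ κ)
    (hk : ∀ N : Subgroup G, K ≤ N → N ≤ H → N ≤ stabilizer G v →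
      (Nat.card (ConjClasses N) : ℝ) ≤ κ * orbitBoundProd N O)
    (hKA : K ≤ A) (hAH : A ≤ H) (hx : x ∈ H) (ht : t ∈ O)
    (hstab : A ⊓ stabilizer G t = (MulAut.conj x • A) ⊓ stabilizer G v) :
    (commPairs ↑(A ⊓ stabilizer G t) (x • (A : Set G)) : ℝ) ≤
      Nat.card ↥(A ⊓ stabilizer G t) *
        (κ * orbitBoundProd A O * orbitWeight (orbitFinset A t).card) := by
  induction A using WellFoundedLT.induction generalizing x t with
  | ind A ih =>
  by_cases hAt : A ≤ stabilizer G t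
  · have hAv : A ≤ stabilizer G v := calc
      A = A ⊓ stabilizer G t := (inf_eq_left.mpr hAt).symm
      _ ≤ stabilizer G v := hstab.trans_le inf_le_right
    exact commPairs_leftCoset_le_of_le_stabilizer (hk A hKA hAH hAv) hAt x
  set N := A ⊓ stabilizer G t with hN
  have hNA : N < A := inf_lt_left.mpr hAt
  have hKN : K ≤ N := le_inf hKA fun k hk => (mem_fixingSubgroup_iff G).mp (hK hk) t ht
  have hfiber : ∀ y ∈ x • (A : Set G),
      (commPairs ↑(N ⊓ stabilizer G (y • t)) (y • (N : Set G)) : ℝ) ≤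
        Nat.card ↥(N ⊓ stabilizer G (y • t)) *
          (κ * orbitBoundProd N O * orbitWeight (orbitFinset N (y • t)).card) := by
    intro y hy
    have hyH : y ∈ H := by
      obtain ⟨a, ha, rfl⟩ := Set.mem_smul_set.mp hy
      exact H.mul_mem hx (hAH ha)
    have hyt : y • t ∈ O := (mem_stabilizer_set.mp (hO hyH) t).mpr ht
    refine ih N hNA hKN (hNA.le.trans hAH) hyH hyt ?_
    rw [hN, conj_smul_inf_stabilizer, conj_smul_eq_of_mem_leftCoset hy, ← hN, hstab, inf_right_comm]
  have hsum := commPairs_leftCoset_le_orbitWeightSum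
    (mul_nonneg hκ (orbitBoundProd_pos N O).le) (hstab.trans_le inf_le_left) hfiber
  have hkey := orbitBoundProd_mul_orbitWeightSum_conj_le (hAH.trans hO) (hO hx) ht hv hstab
  calc (commPairs N (x • (A : Set G)) : ℝ)
      ≤ Nat.card N * (κ * orbitBoundProd N O *
          orbitWeightSum N (orbitFinset (MulAut.conj x • A) (x • t))) := hsum
    _ = Nat.card N * (κ * (orbitBoundProd N O *
          orbitWeightSum N (orbitFinset (MulAut.conj x • A) (x • t)))) := by ring
    _ ≤ Nat.card N * (κ * (orbitWeight (orbitFinset A t).card * orbitBoundProd A O)) := by gcongr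
    _ = Nat.card N * (κ * orbitBoundProd A O * orbitWeight (orbitFinset A t).card) := by ring

lemma commPairs_stabilizer_moved_le (hO : H ≤ stabilizer G (O : Set Ω)) (hw : w ∈ O)
    (hKH : K ≤ H) (hK : K ≤ fixingSubgroup G (O : Set Ω)) (hκ : 0 ≤ κ)
    (hk : ∀ N : Subgroup G, K ≤ N → N ≤ H → N ≤ stabilizer G w →
      (Nat.card (ConjClasses N) : ℝ) ≤ κ * orbitBoundProd N O) :
    (commPairs ↑(H ⊓ stabilizer G w) {x ∈ (H : Set G) | x • w ≠ w} : ℝ) ≤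
      Nat.card ↥(H ⊓ stabilizer G w) * (κ * (orbitBound O.card - 1)) := by
  set N := H ⊓ stabilizer G w with hN
  have hNH : N ≤ H := inf_le_left
  have hNw : N ≤ stabilizer G w := inf_le_right
  have hKN : K ≤ N := le_inf hKH fun k hk => (mem_fixingSubgroup_iff G).mp (hK hk) w hw
  have hNO := le_stabilizer_erase (hNH.trans hO) hNw
  have hmove {x : G} (hx : x ∈ H) : x • w ∈ O := (mem_stabilizer_set.mp (hO hx) w).mpr hw
  have hfiber : ∀ x ∈ {x ∈ (H : Set G) | x • w ≠ w},
      (commPairs ↑(N ⊓ stabilizer G (x • w)) (x • (N : Set G)) : ℝ) ≤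
        Nat.card ↥(N ⊓ stabilizer G (x • w)) *
          (κ * orbitBoundProd N O * orbitWeight (orbitFinset N (x • w)).card) := by
    rintro x ⟨hx, -⟩
    refine commPairs_leftCoset_le_orbitBoundProd hO hw hK hκ hk hKN hNH hx (hmove hx) ?_
    rw [hN, conj_smul_inf_stabilizer, Subgroup.conj_smul_eq_self_of_mem hx, inf_right_comm]
  have hsum := commPairs_le_card_mul_orbitWeightSum (Γ := O.erase w)
    (mul_nonneg hκ (orbitBoundProd_pos N O).le)
    (fun x hx y hy => H.mul_mem (H.inv_mem hx.1) hy.1)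
    (fun x hx => Finset.mem_erase.mpr ⟨hx.2, hmove hx.1⟩) hNO hfiber
  have hbound : 1 + orbitBoundProd N (O.erase w) * orbitWeightSum N (O.erase w) ≤
      orbitBound O.card := by
    rw [← Finset.card_erase_add_one hw, ← sum_card_orbitsIn hNO]
    exact one_add_prod_mul_sum_le fun _ => card_ne_zero_of_mem_orbitsIn
  refine hsum.trans ?_
  rw [mul_assoc κ, ← orbitBoundProd_erase hNw hw]
  gcongr
  linarith

end TransitiveStep

section MainInduction

open scoped Pointwise

variable {G Ω : Type*} [Group G] [Finite G] [MulAction G Ω] {H : Subgroup G} {D : Finset Ω}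
  {u : Ω} {κ : ℝ}

lemma card_conjClasses_le_of_orbit [DecidableEq Ω]
    (hκ : (Nat.card (ConjClasses ↥(H ⊓ fixingSubgroup G (orbitFinset H u : Set Ω))) : ℝ) ≤ κ)
    (hk : ∀ w ∈ orbitFinset H u, ∀ N : Subgroup G,
      H ⊓ fixingSubgroup G (orbitFinset H u : Set Ω) ≤ N → N ≤ H → N ≤ stabilizer G w →
        (Nat.card (ConjClasses N) : ℝ) ≤ κ * orbitBoundProd N (orbitFinset H u)) :
    (Nat.card (ConjClasses H) : ℝ) ≤ κ * orbitBound (orbitFinset H u).card := by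
  have := Fintype.ofFinite G
  have hO := le_stabilizer_orbitFinset H u
  have hstab := sum_card_stabilizer_orbitFinset H u
  set O := orbitFinset H u
  set K := H ⊓ fixingSubgroup G (O : Set Ω)
  have hfixed : commPairs (H : Set G) K ≤ Nat.card H * κ := by
    calc (commPairs (H : Set G) K : ℝ) ≤ Nat.card H * Nat.card (ConjClasses K) := by
          exact_mod_cast commPairs_le_card_mul inf_le_left
      _ ≤ Nat.card H * κ := by gcongr
  have hmoved : (commPairs H {x ∈ (H : Set G) | ∃ w ∈ O, x • w ≠ w} : ℝ) ≤
      Nat.card H * (κ * (orbitBound O.card - 1)) := by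
    rw [← hstab]
    push_cast
    rw [Finset.sum_mul]
    refine (Nat.cast_le.mpr (commPairs_moved_le hO (H : Set G))).trans ?_
    push_cast
    exact Finset.sum_le_sum fun w hw => commPairs_stabilizer_moved_le hO hw inf_le_left
      inf_le_right ((Nat.cast_nonneg _).trans hκ) (hk w hw)
  refine le_of_mul_le_mul_left ?_ (Nat.cast_pos.mpr (Nat.card_pos (α := H)) : (0 : ℝ) < _)
  calc (Nat.card H * Nat.card (ConjClasses H) : ℝ) = commPairs (H : Set G) H := by
        rw [commPairs_self, mul_comm, Nat.cast_mul]
    _ ≤ commPairs (H : Set G) K + commPairs H {x ∈ (H : Set G) | ∃ w ∈ O, x • w ≠ w} := by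
        exact_mod_cast commPairs_le_fixed_add_moved (H : Set G) H O
    _ ≤ Nat.card H * κ + Nat.card H * (κ * (orbitBound O.card - 1)) := add_le_add hfixed hmoved
    _ = Nat.card H * (κ * orbitBound O.card) := by ring

theorem card_conjClasses_le_mul_orbitBoundProd [DecidableEq Ω]
    (hD : H ≤ stabilizer G (D : Set Ω)) :
    (Nat.card (ConjClasses H) : ℝ) ≤
      Nat.card (ConjClasses ↥(H ⊓ fixingSubgroup G (D : Set Ω))) * orbitBoundProd H D := by
  induction D using Finset.strongInduction generalizing H with
  | H D ih =>
  obtain rfl | ⟨u, hu⟩ := D.eq_empty_or_nonempty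
  · rw [Finset.coe_empty, fixingSubgroup_empty, inf_top_eq]
    simp [orbitBoundProd, orbitsIn]
  have hO := le_stabilizer_orbitFinset H u
  obtain hOD | hOD := (orbitFinset_subset hD hu).eq_or_ssubset
  · subst hOD
    rw [orbitBoundProd_orbitFinset]
    refine card_conjClasses_le_of_orbit le_rfl fun w hw N hKN hNH hNw => ?_
    rw [← orbitBoundProd_erase hNw hw, ← inf_fixingSubgroup_erase hKN hNH hNw]
    exact ih _ (Finset.erase_ssubset hw) (le_stabilizer_erase (hNH.trans hD) hNw)
  · set O := orbitFinset H u
    set L := H ⊓ fixingSubgroup G (O : Set Ω) with hL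
    have hDO := le_stabilizer_sdiff hD hO
    have hHL := ih O hOD hO
    have hLK := ih (D \ O) (Finset.sdiff_ssubset hOD.subset ⟨u, self_mem_orbitFinset H u⟩)
      (inf_le_left.trans hDO : L ≤ _)
    have hK : L ⊓ fixingSubgroup G ((D \ O : Finset Ω) : Set Ω) =
        H ⊓ fixingSubgroup G (D : Set Ω) := by
      rw [hL, inf_assoc, ← fixingSubgroup_union, ← Finset.coe_union,
        Finset.union_sdiff_of_subset hOD.subset]
    rw [hK] at hLK
    set k := Nat.card (ConjClasses ↥(H ⊓ fixingSubgroup G (D : Set Ω)))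
    calc (Nat.card (ConjClasses H) : ℝ) ≤ Nat.card (ConjClasses L) * orbitBoundProd H O := hHL
      _ ≤ k * orbitBoundProd H (D \ O) * orbitBoundProd H O := by
          have := orbitBoundProd_mono inf_le_left hDO (N := L)
          have := orbitBoundProd_pos H O
          gcongr
          exact hLK.trans (by gcongr)
      _ = k * orbitBoundProd H D := by rw [orbitBoundProd_eq_mul hO hOD.subset]; ring

theorem card_conjClasses_le_mul_rpow (hD : H ≤ stabilizer G (D : Set Ω)) (hcard : 2 < D.card) :
    (Nat.card (ConjClasses H) : ℝ) ≤
      Nat.card (ConjClasses ↥(H ⊓ fixingSubgroup G (D : Set Ω))) *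
        3 ^ (((D.card : ℝ) - 1) / 2) := by
  classical
  refine (card_conjClasses_le_mul_orbitBoundProd hD).trans ?_
  rw [← orbitBound_eq_rpow hcard]
  gcongr
  exact orbitBoundProd_le hD

lemma card_conjClasses_le_card_conjClasses_top (G : Type*) [Group G] [Finite G] :
    Nat.card (ConjClasses G) ≤ Nat.card (ConjClasses (⊤ : Subgroup G)) :=
  Nat.card_le_card_of_surjective (ConjClasses.map (⊤ : Subgroup G).subtype)
    (ConjClasses.map_surjective Subgroup.topEquiv.surjective)

lemma top_inf_fixingSubgroup_univ (G Ω : Type*) [Group G] [MulAction G Ω] :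
    ⊤ ⊓ fixingSubgroup G (Set.univ : Set Ω) = (toPermHom G Ω).ker := by
  ext g
  simp [mem_fixingSubgroup_iff, Equiv.Perm.ext_iff]

lemma card_conjClasses_bot (G : Type*) [Group G] :
    Nat.card (ConjClasses (⊥ : Subgroup G)) = 1 := by
  have : Subsingleton (ConjClasses (⊥ : Subgroup G)) := Quotient.mk_surjective.subsingleton
  exact Nat.card_unique

end MainInduction

end Maroti

theorem maroti_conjugacy_class_bound_general {G Ω : Type*} [Group G] [Finite G] [MulAction G Ω]
    (hΩ : 2 < Nat.card Ω) :
    (Nat.card (ConjClasses G) : ℝ) ≤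
      Nat.card (ConjClasses (MulAction.toPermHom G Ω).ker) * 3 ^ (((Nat.card Ω : ℝ) - 1) / 2) := by
  have := Nat.finite_of_card_ne_zero (by omega : Nat.card Ω ≠ 0)
  have := Fintype.ofFinite Ω
  have hcard : Nat.card Ω = (Finset.univ : Finset Ω).card := Nat.card_eq_fintype_card
  rw [hcard] at hΩ ⊢
  rw [← Maroti.top_inf_fixingSubgroup_univ, ← Finset.coe_univ]
  exact (Nat.cast_le.mpr (Maroti.card_conjClasses_le_card_conjClasses_top G)).trans
    (Maroti.card_conjClasses_le_mul_rpow (by simp) hΩ)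

/-- (Maróti) For `n > 2`, any subgroup `G` of the symmetric group on `n` points has at
most `3 ^ ((n-1)/2)` conjugacy classes. -/
theorem maroti_conjugacy_class_bound (n : ℕ) (hn : 2 < n)
    (G : Subgroup (Equiv.Perm (Fin n))) :
    (Nat.card (ConjClasses G) : ℝ) ≤ (3 : ℝ) ^ (((n : ℝ) - 1) / 2) := by
  have hker : (MulAction.toPermHom G (Fin n)).ker = ⊥ :=
    (MonoidHom.ker_eq_bot_iff _).mpr MulAction.toPerm_injective
  have hbound := maroti_conjugacy_class_bound_general (G := G) (Ω := Fin n) (by simpa)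
  rwa [hker, Maroti.card_conjClasses_bot, Nat.cast_one, one_mul, Nat.card_fin] at hbound
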